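/- For trace-class operators: if 0 ≤ Aₙ, Aₙ ⇀ A weakly-* in the trace class, and limsupₙ tr Aₙ ≤ tr A, then Aₙ → A strongly in trace norm. -/

import Mathlib

set_option synthInstance.maxHeartbeats 1000000
set_option maxHeartbeats 1000000

open Filter

variable {H : Type*} [NormedAddCommGroup H] [InnerProductSpace ℂ H] [CompleteSpace H]

/-- The trace `∑ᵢ ⟨eᵢ, A eᵢ⟩` of an operator w.r.t. a Hilbert basis `e` (basis independent
on trace-class operators). -/
noncomputable def opTrace (e : HilbertBasis ℕ ℂ H) (A : H →L[ℂ] H) : ℂ :=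
  ∑' i, inner (𝕜 := ℂ) (e i) (A (e i))

/-- The trace norm `tr |A| = tr √(A⋆A)`, computed in the Hilbert basis `e`. -/
noncomputable def traceNorm (e : HilbertBasis ℕ ℂ H) (A : H →L[ℂ] H) : ℝ :=
  ∑' i, (inner (𝕜 := ℂ) (e i) ((CFC.sqrt (star A * A)) (e i))).re

/-- Square root of a positive operator. -/
theorem aux_sqrt (B : H →L[ℂ] H) (hB : B.IsPositive) :
    ∃ S : H →L[ℂ] H, ∀ x y, inner ℂ x (B y) = inner ℂ (S x) (S y) ∧
      inner ℂ (S x) y = inner ℂ x (S y) := by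
  have h0 : (0 : H →L[ℂ] H) ≤ B := (ContinuousLinearMap.nonneg_iff_isPositive B).2 hB
  have hs : IsSelfAdjoint (CFC.sqrt B) := IsSelfAdjoint.of_nonneg (CFC.sqrt_nonneg B)
  have key : ∀ x y, inner ℂ (CFC.sqrt B x) y = inner ℂ x (CFC.sqrt B y) := fun x y =>
    hs.isSymmetric x y
  refine ⟨CFC.sqrt B, fun x y => ⟨?_, key x y⟩⟩
  rw [key]
  conv_lhs => rw [← CFC.sqrt_mul_sqrt_self B h0]
  rfl

theorem aux_parseval (e : HilbertBasis ℕ ℂ H) (x : H) :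
    HasSum (fun j => ‖inner ℂ (e j) x‖ ^ 2) (‖x‖ ^ 2) := by
  have h := e.hasSum_inner_mul_inner x x
  have h2 := Complex.hasSum_re h
  convert h2 using 1
  · ext j
    rw [← inner_conj_symm x (e j), mul_comm, Complex.mul_conj, Complex.normSq_eq_norm_sq,
      Complex.ofReal_re]
  · exact (inner_self_eq_norm_sq (𝕜 := ℂ) x).symm

theorem aux_hs (e : HilbertBasis ℕ ℂ H) (S X : H →L[ℂ] H)
    (hS : ∀ x y, inner ℂ (S x) y = inner ℂ x (S y))
    (hsum : Summable fun j => ‖S (e j)‖ ^ 2) (hX : ‖X‖ ≤ 1) (F : Finset ℕ) :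
    ∑ i ∈ F, ‖S (X (e i))‖ ^ 2 ≤ ∑' j, ‖S (e j)‖ ^ 2 := by
  have h1 : HasSum (fun j => ∑ i ∈ F, ‖inner ℂ (e j) (S (X (e i)))‖ ^ 2)
      (∑ i ∈ F, ‖S (X (e i))‖ ^ 2) := hasSum_sum fun i _ => aux_parseval e _
  refine hasSum_le ?_ h1 hsum.hasSum
  intro j
  have h2 : ∀ i, ‖inner ℂ (e j) (S (X (e i)))‖ = ‖inner ℂ (e i)
      (ContinuousLinearMap.adjoint X (S (e j)))‖ := by
    intro i
    rw [← hS, ← ContinuousLinearMap.adjoint_inner_left, norm_inner_symm]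
  simp_rw [h2]
  refine (e.orthonormal.sum_inner_products_le _).trans ?_
  have h3 : ‖ContinuousLinearMap.adjoint X (S (e j))‖ ≤ ‖S (e j)‖ := by
    refine (ContinuousLinearMap.le_opNorm _ _).trans ?_
    rw [LinearIsometryEquiv.norm_map]
    exact mul_le_of_le_one_left (norm_nonneg _) hX
  gcongr

theorem aux_holder (e : HilbertBasis ℕ ℂ H) (B X : H →L[ℂ] H) (hB : B.IsPositive)
    (hsum : Summable fun i => (inner ℂ (e i) (B (e i))).re) (hX : ‖X‖ ≤ 1) (F : Finset ℕ) :
    ∑ i ∈ F, ‖inner ℂ (e i) (B (X (e i)))‖ ≤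
      √(∑ i ∈ F, (inner ℂ (e i) (B (e i))).re) * √(∑' i, (inner ℂ (e i) (B (e i))).re) := by
  obtain ⟨S, hS⟩ := aux_sqrt B hB
  have hd : ∀ i, (inner ℂ (e i) (B (e i))).re = ‖S (e i)‖ ^ 2 := fun i => by
    rw [(hS _ _).1]; exact (inner_self_eq_norm_sq (𝕜 := ℂ) _)
  simp_rw [hd] at hsum ⊢
  calc ∑ i ∈ F, ‖inner ℂ (e i) (B (X (e i)))‖ ≤ ∑ i ∈ F, ‖S (e i)‖ * ‖S (X (e i))‖ := by
        gcongr with i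
        rw [(hS _ _).1]; exact norm_inner_le_norm _ _
    _ ≤ √(∑ i ∈ F, ‖S (e i)‖ ^ 2) * √(∑ i ∈ F, ‖S (X (e i))‖ ^ 2) :=
        Real.sum_mul_le_sqrt_mul_sqrt _ _ _
    _ ≤ _ := by
        gcongr
        exact aux_hs e S X (fun x y => (hS x y).2) hsum hX F

theorem aux_cs (B : H →L[ℂ] H) (hB : B.IsPositive) (x y : H) :
    ‖inner ℂ x (B y)‖ ^ 2 ≤ (inner ℂ x (B x)).re * (inner ℂ y (B y)).re := by
  obtain ⟨S, hS⟩ := aux_sqrt B hB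
  have hd : ∀ x, (inner ℂ x (B x)).re = ‖S x‖ ^ 2 := fun i => by
    rw [(hS _ _).1]; exact (inner_self_eq_norm_sq (𝕜 := ℂ) _)
  rw [hd, hd, (hS _ _).1, ← mul_pow]
  gcongr
  exact norm_inner_le_norm _ _

theorem aux_abs (T : H →L[ℂ] H) (hT : IsSelfAdjoint T) {δ : ℝ} (hδ : 0 < δ) :
    ∃ X : H →L[ℂ] H, ‖X‖ ≤ 1 ∧ ‖CFC.sqrt (star T * T) - T * X‖ ≤ δ := by
  have hc : Continuous (fun t : ℝ => t / (|t| + δ)) :=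
    continuous_id.div (by fun_prop) (fun t => by positivity)
  have habs : CFC.sqrt (star T * T) = cfc (fun t : ℝ => ‖t‖) T := CFC.abs_eq_cfc_norm T hT
  refine ⟨cfc (fun t : ℝ => t / (|t| + δ)) T, ?_, ?_⟩
  · refine norm_cfc_le zero_le_one fun t _ => ?_
    rw [Real.norm_eq_abs, abs_div, abs_of_pos (by positivity : 0 < |t| + δ)]
    rw [div_le_one (by positivity)]
    linarith
  · have h1 : T * cfc (fun t : ℝ => t / (|t| + δ)) T
        = cfc (fun t : ℝ => t * (t / (|t| + δ))) T := by
      rw [cfc_mul (fun t : ℝ => t) _ T (by fun_prop) hc.continuousOn, cfc_id' ℝ T]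
    rw [habs, h1, ← cfc_sub _ _ T (by fun_prop) (by fun_prop)]
    refine norm_cfc_le hδ.le fun t _ => ?_
    have h2 : ‖t‖ - t * (t / (|t| + δ)) = |t| * δ / (|t| + δ) := by
      have : |t| + δ ≠ 0 := by positivity
      rw [Real.norm_eq_abs]
      field_simp
      nlinarith [sq_abs t]
    rw [h2, Real.norm_eq_abs, abs_of_nonneg (by positivity), div_le_iff₀ (by positivity)]
    nlinarith [abs_nonneg t]

theorem aux_nonneg (B : H →L[ℂ] H) (hB : B.IsPositive) (x : H) :
    0 ≤ (inner ℂ x (B x)).re := by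
  obtain ⟨S, hS⟩ := aux_sqrt B hB
  rw [(hS _ _).1]; exact inner_self_nonneg (𝕜 := ℂ)

theorem aux_real (B : H →L[ℂ] H) (hB : B.IsPositive) (x : H) :
    inner ℂ x (B x) = (((inner ℂ x (B x)).re : ℝ) : ℂ) := by
  obtain ⟨S, hS⟩ := aux_sqrt B hB
  rw [(hS _ _).1]
  exact (inner_self_ofReal_re (𝕜 := ℂ) _).symm

theorem aux_trace (e : HilbertBasis ℕ ℂ H) (B : H →L[ℂ] H) (hB : B.IsPositive) :
    (opTrace e B).re = ∑' i, (inner ℂ (e i) (B (e i))).re := by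
  unfold opTrace
  have : (fun i => inner ℂ (e i) (B (e i))) =
      fun i => (((inner ℂ (e i) (B (e i))).re : ℝ) : ℂ) := funext fun i => aux_real B hB _
  rw [this, ← Complex.ofReal_tsum, Complex.ofReal_re]

/-- Weak operator convergence. -/
theorem aux_weak (e : HilbertBasis ℕ ℂ H)
    (A : ℕ → H →L[ℂ] H) (Alim : H →L[ℂ] H)
    (hweak : ∀ K : H →L[ℂ] H, IsCompactOperator K →
      Tendsto (fun n => opTrace e (A n ∘L K)) atTop (nhds (opTrace e (Alim ∘L K))))
    (f g : H) : Tendsto (fun n => inner ℂ f (A n g)) atTop (nhds (inner ℂ f (Alim g))) := by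
  have h1 : ∀ B : H →L[ℂ] H,
      opTrace e (B ∘L (InnerProductSpace.rankOne ℂ g f)) = inner ℂ f (B g) := by
    intro B
    unfold opTrace
    rw [← e.tsum_inner_mul_inner f (B g)]
    congr 1
    ext i
    simp [InnerProductSpace.rankOne_apply]
  have hK : IsCompactOperator (InnerProductSpace.rankOne ℂ g f : H →L[ℂ] H) := by
    rw [InnerProductSpace.rankOne_def', ContinuousLinearMap.coe_comp]
    exact (isCompactOperator_of_locallyCompactSpace_rng
      (ContinuousLinearMap.toSpanSingleton ℂ g)).comp_clm _
  have := hweak _ hK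
  simpa only [h1] using this

/-- A compact diagonal operator. -/
theorem aux_diag (e : HilbertBasis ℕ ℂ H) (N : ℕ → ℕ) :
    ∃ (K : H →L[ℂ] H) (κ : ℕ → ℝ), IsCompactOperator K ∧ (∀ i, K (e i) = (κ i : ℂ) • e i) ∧
      (∀ i, 0 ≤ κ i ∧ κ i ≤ 2) ∧ ∀ k i, i < N k → (1 / 2 : ℝ) ^ k ≤ κ i := by
  classical
  let V : ℕ → Submodule ℂ H := fun k =>
    Submodule.span ℂ (((Finset.range (N k)).image e : Finset H) : Set H)
  have hfin : ∀ k, FiniteDimensional ℂ (V k) := fun k => FiniteDimensional.span_finset ℂ _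
  let P : ℕ → H →L[ℂ] H := fun k => (V k).starProjection
  have hPn : ∀ k, ‖P k‖ ≤ 1 := fun k => Submodule.starProjection_norm_le _
  have hPc : ∀ k, IsCompactOperator (P k) := fun k => by
    have : IsCompactOperator ((V k).orthogonalProjectionOnto) :=
      isCompactOperator_of_locallyCompactSpace_dom _
    exact this.clm_comp (V k).subtypeL
  have hPe : ∀ k i, P k (e i) = (if i < N k then (1 : ℝ) else 0 : ℝ) • e i := by
    intro k i
    split_ifs with h
    · rw [one_smul]
      refine Submodule.starProjection_eq_self_iff.2 (Submodule.subset_span ?_)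
      simp only [Finset.coe_image, Finset.coe_range]
      exact ⟨i, h, rfl⟩
    · rw [zero_smul]
      refine (Submodule.starProjection_apply_eq_zero_iff _).2 ?_
      rw [Submodule.mem_orthogonal]
      intro u hu
      induction hu using Submodule.span_induction with
      | mem x hx =>
        simp only [Finset.coe_image, Finset.coe_range] at hx
        obtain ⟨j, hj, rfl⟩ := hx
        refine e.orthonormal.2 ?_
        rintro rfl
        exact h hj
      | zero => simp
      | add x y _ _ hx hy => rw [inner_add_left, hx, hy, add_zero]
      | smul c x _ hx => rw [inner_smul_left, hx, mul_zero]
  have hs : Summable fun k => ((1 / 2 : ℝ) ^ k : ℝ) • P k := by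
    refine Summable.of_norm_bounded summable_geometric_two fun k => ?_
    rw [norm_smul, Real.norm_of_nonneg (by positivity)]
    exact mul_le_of_le_one_right (by positivity) (hPn k)
  have hks : ∀ i, Summable fun k => (1 / 2 : ℝ) ^ k * (if i < N k then (1 : ℝ) else 0) := by
    intro i
    refine Summable.of_nonneg_of_le (fun k => by positivity) (fun k => ?_) summable_geometric_two
    split_ifs <;> simp
  refine ⟨∑' k, ((1 / 2 : ℝ) ^ k : ℝ) • P k,
    fun i => ∑' k, (1 / 2 : ℝ) ^ k * (if i < N k then (1 : ℝ) else 0), ?_, ?_, ?_, ?_⟩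
  · refine isCompactOperator_of_tendsto hs.hasSum (Eventually.of_forall fun F => ?_)
    induction F using Finset.induction_on with
    | empty => simpa using isCompactOperator_zero
    | insert a s ha ih =>
      rw [Finset.sum_insert ha]
      exact ((hPc a).smul _).add ih
  · intro i
    have h1 := (ContinuousLinearMap.apply ℂ H (e i)).hasSum hs.hasSum
    have h2 : HasSum (fun k => ((1 / 2 : ℝ) ^ k * (if i < N k then (1 : ℝ) else 0)) • e i)
        ((∑' k, (1 / 2 : ℝ) ^ k * (if i < N k then (1 : ℝ) else 0)) • e i) :=
      (hks i).hasSum.smul_const (e i)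
    have h3 := h1.unique (by
      convert h2 using 2 with k
      simp only [ContinuousLinearMap.apply_apply, smul_apply, hPe, smul_smul])
    rw [Complex.coe_smul]
    exact h3
  · intro i
    refine ⟨tsum_nonneg fun k => by positivity, ?_⟩
    refine le_of_le_of_eq ?_ tsum_geometric_two
    refine (hks i).tsum_le_tsum (fun k => ?_) summable_geometric_two
    split_ifs <;> simp
  · intro k i hi
    have := (hks i).le_tsum k (fun j _ => by positivity)
    simpa [hi] using this

/-- Weak-* convergent sequences have bounded traces. -/
theorem aux_bdd (e : HilbertBasis ℕ ℂ H)
    (A : ℕ → H →L[ℂ] H) (Alim : H →L[ℂ] H)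
    (hpos : ∀ n, (A n).IsPositive)
    (htc : ∀ n, Summable fun i => (inner ℂ (e i) (A n (e i))).re)
    (hweak : ∀ K : H →L[ℂ] H, IsCompactOperator K →
      Tendsto (fun n => opTrace e (A n ∘L K)) atTop (nhds (opTrace e (Alim ∘L K)))) :
    ∃ C : ℝ, ∀ n, ∑' i, (inner ℂ (e i) (A n (e i))).re ≤ C := by
  by_contra! hcon
  have h1 : ∀ k : ℕ, ∃ n N : ℕ, (4 : ℝ) ^ k < ∑ i ∈ Finset.range N,
      (inner ℂ (e i) (A n (e i))).re := by
    intro k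
    obtain ⟨n, hn⟩ := hcon ((4 : ℝ) ^ k)
    obtain ⟨N, hN⟩ := ((htc n).hasSum.tendsto_sum_nat.eventually (lt_mem_nhds hn)).exists
    exact ⟨n, N, hN⟩
  choose n N hN using h1
  obtain ⟨K, κ, hK, hKe, hκ, hκN⟩ := aux_diag e N
  obtain ⟨M, hM⟩ := (hweak K hK).norm.bddAbove_range
  have h2 : ∀ m, (opTrace e (A m ∘L K)).re = ∑' i, κ i * (inner ℂ (e i) (A m (e i))).re := by
    intro m
    unfold opTrace
    have : (fun i => inner ℂ (e i) ((A m ∘L K) (e i))) =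
        fun i => ((κ i * (inner ℂ (e i) (A m (e i))).re : ℝ) : ℂ) := by
      funext i
      rw [ContinuousLinearMap.comp_apply, hKe, map_smul, inner_smul_right,
        aux_real (A m) (hpos m) (e i)]
      simp
    rw [this, ← Complex.ofReal_tsum, Complex.ofReal_re]
  have h3 : ∀ k : ℕ, (2 : ℝ) ^ k ≤ M := by
    intro k
    have hnn : ∀ i, 0 ≤ κ i * (inner ℂ (e i) (A (n k) (e i))).re := fun i =>
      mul_nonneg (hκ i).1 (aux_nonneg _ (hpos _) _)
    have hsm : Summable fun i => κ i * (inner ℂ (e i) (A (n k) (e i))).re :=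
      Summable.of_nonneg_of_le hnn
        (fun i => mul_le_mul_of_nonneg_right (hκ i).2 (aux_nonneg _ (hpos _) _))
        ((htc (n k)).mul_left 2)
    calc (2 : ℝ) ^ k = (1 / 2) ^ k * 4 ^ k := by rw [← mul_pow]; norm_num
      _ ≤ (1 / 2) ^ k * ∑ i ∈ Finset.range (N k), (inner ℂ (e i) (A (n k) (e i))).re := by
          gcongr; exact (hN k).le
      _ ≤ ∑ i ∈ Finset.range (N k), κ i * (inner ℂ (e i) (A (n k) (e i))).re := by
          rw [Finset.mul_sum]
          refine Finset.sum_le_sum fun i hi => ?_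
          exact mul_le_mul_of_nonneg_right (hκN k i (Finset.mem_range.1 hi))
            (aux_nonneg _ (hpos _) _)
      _ ≤ ∑' i, κ i * (inner ℂ (e i) (A (n k) (e i))).re := hsm.sum_le_tsum _ fun i _ => hnn i
      _ = (opTrace e (A (n k) ∘L K)).re := (h2 _).symm
      _ ≤ ‖opTrace e (A (n k) ∘L K)‖ := Complex.re_le_norm _
      _ ≤ M := hM ⟨n k, rfl⟩
  obtain ⟨k, hk⟩ := pow_unbounded_of_one_lt M (one_lt_two (α := ℝ))
  exact absurd (h3 k) (not_le.2 hk)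

theorem aux_tail (e : HilbertBasis ℕ ℂ H)
    (A : ℕ → H →L[ℂ] H) (Alim : H →L[ℂ] H)
    (hpos : ∀ n, (A n).IsPositive) (hposlim : Alim.IsPositive)
    (htc : ∀ n, Summable fun i => (inner ℂ (e i) (A n (e i))).re)
    (htclim : Summable fun i => (inner ℂ (e i) (Alim (e i))).re)
    (hweak : ∀ K : H →L[ℂ] H, IsCompactOperator K →
      Tendsto (fun n => opTrace e (A n ∘L K)) atTop (nhds (opTrace e (Alim ∘L K))))
    (hlimsup : Filter.limsup (fun n => (opTrace e (A n)).re) atTop ≤ (opTrace e Alim).re)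
    {ε : ℝ} (hε : 0 < ε) :
    ∃ N : ℕ, (∑' i, (inner ℂ (e i) (Alim (e i))).re -
        ∑ i ∈ Finset.range N, (inner ℂ (e i) (Alim (e i))).re < ε) ∧
      ∀ᶠ n in atTop, ∑' i, (inner ℂ (e i) (A n (e i))).re -
        ∑ i ∈ Finset.range N, (inner ℂ (e i) (A n (e i))).re < ε := by
  obtain ⟨C, hC⟩ := aux_bdd e A Alim hpos htc hweak
  simp_rw [aux_trace e _ (hpos _), aux_trace e _ hposlim] at hlimsup
  have h1 : ∀ᶠ n in atTop, ∑' i, (inner ℂ (e i) (A n (e i))).re <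
      ∑' i, (inner ℂ (e i) (Alim (e i))).re + ε / 3 :=
    eventually_lt_of_limsup_lt (lt_of_le_of_lt hlimsup (by linarith))
      ⟨C, by simpa using ⟨0, fun n _ => hC n⟩⟩
  obtain ⟨N, hN⟩ := (htclim.hasSum.tendsto_sum_nat.eventually (lt_mem_nhds
    (sub_lt_self (∑' i, (inner ℂ (e i) (Alim (e i))).re)
      (by positivity : 0 < ε / 3)))).exists
  have h2 : Tendsto (fun n => ∑ i ∈ Finset.range N, (inner ℂ (e i) (A n (e i))).re) atTop
      (nhds (∑ i ∈ Finset.range N, (inner ℂ (e i) (Alim (e i))).re)) :=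
    tendsto_finsetSum _ fun i _ =>
      (Complex.continuous_re.tendsto _).comp (aux_weak e A Alim hweak (e i) (e i))
  refine ⟨N, by linarith, ?_⟩
  filter_upwards [h1, h2.eventually (lt_mem_nhds
    (sub_lt_self (∑ i ∈ Finset.range N, (inner ℂ (e i) (Alim (e i))).re)
      (by positivity : 0 < ε / 3)))] with n hn1 hn2
  linarith

theorem aux_Ico {f : ℕ → ℝ} (hf : ∀ i, 0 ≤ f i) (hs : Summable f) (N M : ℕ) (hNM : N ≤ M) :
    ∑ i ∈ Finset.Ico N M, f i ≤ ∑' i, f i - ∑ i ∈ Finset.range N, f i := by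
  rw [Finset.sum_Ico_eq_sub _ hNM]
  have := hs.sum_le_tsum (Finset.range M) fun i _ => hf i
  linarith

/-- Quantitative bound for `‖(A - B) e_i‖²`. -/
theorem aux_strong_bound (e : HilbertBasis ℕ ℂ H) (A B : H →L[ℂ] H)
    (hA : A.IsPositive) (hB : B.IsPositive)
    (hsA : Summable fun i => (inner ℂ (e i) (A (e i))).re)
    (hsB : Summable fun i => (inner ℂ (e i) (B (e i))).re) {C ε : ℝ}
    (hCA : ∑' i, (inner ℂ (e i) (A (e i))).re ≤ C)
    (hCB : ∑' i, (inner ℂ (e i) (B (e i))).re ≤ C) (N : ℕ)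
    (htA : ∑' i, (inner ℂ (e i) (A (e i))).re -
        ∑ i ∈ Finset.range N, (inner ℂ (e i) (A (e i))).re < ε)
    (htB : ∑' i, (inner ℂ (e i) (B (e i))).re -
        ∑ i ∈ Finset.range N, (inner ℂ (e i) (B (e i))).re < ε) (i : ℕ) :
    ‖(A - B) (e i)‖ ^ 2 ≤
      ∑ j ∈ Finset.range N, ‖inner ℂ (e j) ((A - B) (e i))‖ ^ 2 + 4 * (ε * C) := by
  have tail : ∀ D : H →L[ℂ] H, D.IsPositive →
      (Summable fun i => (inner ℂ (e i) (D (e i))).re) →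
      (∑' i, (inner ℂ (e i) (D (e i))).re ≤ C) →
      (∑' i, (inner ℂ (e i) (D (e i))).re -
        ∑ i ∈ Finset.range N, (inner ℂ (e i) (D (e i))).re < ε) → ∀ M, N ≤ M →
      ∑ j ∈ Finset.Ico N M, ‖inner ℂ (e j) (D (e i))‖ ^ 2 ≤ ε * C := by
    intro D hD hsD hCD htD M hNM
    have hnn := fun j => aux_nonneg D hD (e j)
    calc ∑ j ∈ Finset.Ico N M, ‖inner ℂ (e j) (D (e i))‖ ^ 2
        ≤ ∑ j ∈ Finset.Ico N M, (inner ℂ (e j) (D (e j))).re * (inner ℂ (e i) (D (e i))).re :=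
          Finset.sum_le_sum fun j _ => aux_cs D hD _ _
      _ = (∑ j ∈ Finset.Ico N M, (inner ℂ (e j) (D (e j))).re) * (inner ℂ (e i) (D (e i))).re :=
          (Finset.sum_mul _ _ _).symm
      _ ≤ ε * C := by
          have h1 := aux_Ico hnn hsD N M hNM
          have h0 : 0 ≤ ∑ j ∈ Finset.Ico N M, (inner ℂ (e j) (D (e j))).re :=
            Finset.sum_nonneg fun j _ => hnn j
          refine mul_le_mul (h1.trans htD.le) ((hsD.le_tsum i fun j _ => hnn j).trans hCD)
            (hnn i) (by linarith)
  have hp := aux_parseval e ((A - B) (e i))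
  rw [← hp.tsum_eq]
  have hεC : 0 ≤ ε * C := le_trans (Finset.sum_nonneg fun j _ => by positivity)
    (tail A hA hsA hCA htA N le_rfl)
  refine Real.tsum_le_of_sum_range_le (fun j => by positivity) fun M => ?_
  rcases le_total M N with hMN | hNM
  · have : ∑ j ∈ Finset.range M, ‖inner ℂ (e j) ((A - B) (e i))‖ ^ 2 ≤
        ∑ j ∈ Finset.range N, ‖inner ℂ (e j) ((A - B) (e i))‖ ^ 2 :=
      Finset.sum_le_sum_of_subset_of_nonneg (Finset.range_mono hMN) fun j _ _ => by positivity
    linarith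
  · rw [← Finset.sum_range_add_sum_Ico _ hNM]
    have h1 : ∑ j ∈ Finset.Ico N M, ‖inner ℂ (e j) ((A - B) (e i))‖ ^ 2 ≤
        ∑ j ∈ Finset.Ico N M, (2 * ‖inner ℂ (e j) (A (e i))‖ ^ 2 +
          2 * ‖inner ℂ (e j) (B (e i))‖ ^ 2) := by
      refine Finset.sum_le_sum fun j _ => ?_
      rw [sub_apply, inner_sub_right]
      have := norm_sub_le (inner ℂ (e j) (A (e i))) (inner ℂ (e j) (B (e i)))
      have h0 := norm_nonneg (inner ℂ (e j) (A (e i)) - inner ℂ (e j) (B (e i)))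
      nlinarith [sq_nonneg (‖inner ℂ (e j) (A (e i))‖ - ‖inner ℂ (e j) (B (e i))‖)]
    rw [Finset.sum_add_distrib, ← Finset.mul_sum, ← Finset.mul_sum] at h1
    have h2 := tail A hA hsA hCA htA M hNM
    have h3 := tail B hB hsB hCB htB M hNM
    linarith

/-- Quantitative trace norm bound. -/
theorem aux_trace_bound (e : HilbertBasis ℕ ℂ H) (A B : H →L[ℂ] H)
    (hA : A.IsPositive) (hB : B.IsPositive)
    (hsA : Summable fun i => (inner ℂ (e i) (A (e i))).re)
    (hsB : Summable fun i => (inner ℂ (e i) (B (e i))).re) {C ε : ℝ}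
    (hCA : ∑' i, (inner ℂ (e i) (A (e i))).re ≤ C)
    (hCB : ∑' i, (inner ℂ (e i) (B (e i))).re ≤ C) (N : ℕ)
    (htA : ∑' i, (inner ℂ (e i) (A (e i))).re -
        ∑ i ∈ Finset.range N, (inner ℂ (e i) (A (e i))).re < ε)
    (htB : ∑' i, (inner ℂ (e i) (B (e i))).re -
        ∑ i ∈ Finset.range N, (inner ℂ (e i) (B (e i))).re < ε) :
    traceNorm e (A - B) ≤ ∑ i ∈ Finset.range N, ‖(A - B) (e i)‖ + 2 * (√ε * √C) := by
  unfold traceNorm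
  have hT : IsSelfAdjoint (A - B) := hA.isSelfAdjoint.sub hB.isSelfAdjoint
  set R := CFC.sqrt (star (A - B) * (A - B)) with hR
  have hRpos : R.IsPositive :=
    (ContinuousLinearMap.nonneg_iff_isPositive R).1 (CFC.sqrt_nonneg _)
  have hnn := fun i => aux_nonneg R hRpos (e i)
  have main : ∀ M, N ≤ M → ∑ i ∈ Finset.range M, (inner ℂ (e i) (R (e i))).re ≤
      ∑ i ∈ Finset.range N, ‖(A - B) (e i)‖ + 2 * (√ε * √C) := by
    intro M hNM
    refine le_of_forall_pos_le_add fun η hη => ?_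
    obtain ⟨X, hX, hRX⟩ := aux_abs (A - B) hT (δ := η / (M + 1)) (by positivity)
    have h1 : ∀ i, (inner ℂ (e i) (R (e i))).re ≤
        η / (M + 1) + ‖inner ℂ (e i) ((A - B) (X (e i)))‖ := by
      intro i
      have : R (e i) = (R - (A - B) * X) (e i) + (A - B) (X (e i)) := by
        simp
      rw [this, inner_add_right, Complex.add_re]
      refine add_le_add ?_ (Complex.re_le_norm _)
      refine (Complex.re_le_norm _).trans ((norm_inner_le_norm _ _).trans ?_)
      rw [e.orthonormal.1 i, one_mul]
      refine (ContinuousLinearMap.le_opNorm _ _).trans ?_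
      rw [e.orthonormal.1 i, mul_one]
      exact hRX
    have h2 : ∀ i, ‖inner ℂ (e i) ((A - B) (X (e i)))‖ ≤ ‖(A - B) (e i)‖ := by
      intro i
      rw [← (show inner ℂ ((A - B) (e i)) (X (e i)) = inner ℂ (e i) ((A - B) (X (e i))) from
        hT.isSymmetric _ _)]
      refine (norm_inner_le_norm _ _).trans (mul_le_of_le_one_right (norm_nonneg _) ?_)
      refine (ContinuousLinearMap.le_opNorm _ _).trans ?_
      rw [e.orthonormal.1 i, mul_one]
      exact hX
    have tail : ∀ D : H →L[ℂ] H, D.IsPositive →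
        (Summable fun i => (inner ℂ (e i) (D (e i))).re) →
        (∑' i, (inner ℂ (e i) (D (e i))).re ≤ C) →
        (∑' i, (inner ℂ (e i) (D (e i))).re -
          ∑ i ∈ Finset.range N, (inner ℂ (e i) (D (e i))).re < ε) →
        ∑ i ∈ Finset.Ico N M, ‖inner ℂ (e i) (D (X (e i)))‖ ≤ √ε * √C := by
      intro D hD hsD hCD htD
      refine (aux_holder e D X hD hsD hX _).trans ?_
      have := (aux_Ico (fun i => aux_nonneg D hD (e i)) hsD N M hNM).trans htD.le
      gcongr
    have h3 : ∑ i ∈ Finset.Ico N M, ‖inner ℂ (e i) ((A - B) (X (e i)))‖ ≤ 2 * (√ε * √C) := by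
      calc _ ≤ ∑ i ∈ Finset.Ico N M, (‖inner ℂ (e i) (A (X (e i)))‖ +
            ‖inner ℂ (e i) (B (X (e i)))‖) := by
            refine Finset.sum_le_sum fun i _ => ?_
            rw [sub_apply, inner_sub_right]
            exact norm_sub_le _ _
        _ ≤ _ := by
            rw [Finset.sum_add_distrib]
            linarith [tail A hA hsA hCA htA, tail B hB hsB hCB htB]
    calc ∑ i ∈ Finset.range M, (inner ℂ (e i) (R (e i))).re
        ≤ ∑ i ∈ Finset.range M, (η / (M + 1) + ‖inner ℂ (e i) ((A - B) (X (e i)))‖) :=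
          Finset.sum_le_sum fun i _ => h1 i
      _ = M * (η / (M + 1)) + (∑ i ∈ Finset.range N, ‖inner ℂ (e i) ((A - B) (X (e i)))‖ +
          ∑ i ∈ Finset.Ico N M, ‖inner ℂ (e i) ((A - B) (X (e i)))‖) := by
          rw [Finset.sum_add_distrib, Finset.sum_range_add_sum_Ico _ hNM]
          simp
      _ ≤ η + (∑ i ∈ Finset.range N, ‖(A - B) (e i)‖ + 2 * (√ε * √C)) := by
          refine add_le_add ?_ (add_le_add (Finset.sum_le_sum fun i _ => h2 i) h3)
          rw [mul_div_assoc', div_le_iff₀ (by positivity)]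
          nlinarith
      _ = _ := add_comm _ _
  refine Real.tsum_le_of_sum_range_le hnn fun M => ?_
  rcases le_total M N with hMN | hNM
  · exact (Finset.sum_le_sum_of_subset_of_nonneg (Finset.range_mono hMN)
      fun j _ _ => hnn j).trans (main N le_rfl)
  · exact main M hNM

/-- If `0 ≤ Aₙ` are trace-class operators on a separable Hilbert space,
`Aₙ ⇀ A` weakly-* in the trace class (i.e. `tr[Aₙ K] → tr[A K]` for every compact `K`), and
`limsupₙ tr Aₙ ≤ tr A`, then `Aₙ → A` strongly in trace norm. -/
theorem traceNorm_tendsto_of_weakStar_and_limsup_trace_le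
    (e : HilbertBasis ℕ ℂ H)
    (A : ℕ → H →L[ℂ] H) (Alim : H →L[ℂ] H)
    (hpos : ∀ n, (A n).IsPositive) (hposlim : Alim.IsPositive)
    (htc : ∀ n, Summable fun i => (inner (𝕜 := ℂ) (e i) (A n (e i))).re)
    (htclim : Summable fun i => (inner (𝕜 := ℂ) (e i) (Alim (e i))).re)
    (hweak : ∀ K : H →L[ℂ] H, IsCompactOperator K →
      Tendsto (fun n => opTrace e (A n ∘L K)) atTop (nhds (opTrace e (Alim ∘L K))))
    (hlimsup : Filter.limsup (fun n => (opTrace e (A n)).re) atTop ≤ (opTrace e Alim).re) :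
    Tendsto (fun n => traceNorm e (A n - Alim)) atTop (nhds 0) := by
  obtain ⟨C₀, hC₀⟩ := aux_bdd e A Alim hpos htc hweak
  set C := max (max C₀ (∑' i, (inner ℂ (e i) (Alim (e i))).re)) 1 with hCdef
  have hC1 : 1 ≤ C := le_max_right _ _
  have hCA : ∀ n, ∑' i, (inner ℂ (e i) (A n (e i))).re ≤ C := fun n =>
    (hC₀ n).trans ((le_max_left _ _).trans (le_max_left _ _))
  have hCl : ∑' i, (inner ℂ (e i) (Alim (e i))).re ≤ C :=
    (le_max_right _ _).trans (le_max_left _ _)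
  have strong : ∀ i, Tendsto (fun n => ‖(A n - Alim) (e i)‖) atTop (nhds 0) := by
    intro i
    have hsq : Tendsto (fun n => ‖(A n - Alim) (e i)‖ ^ 2) atTop (nhds 0) := by
      rw [tendsto_order]
      refine ⟨fun a ha => Eventually.of_forall fun n => lt_of_lt_of_le ha (by positivity), ?_⟩
      intro ε hε
      obtain ⟨N, hN1, hN2⟩ := aux_tail e A Alim hpos hposlim htc htclim hweak hlimsup
        (ε := ε / (8 * C)) (by positivity)
      have h1 : Tendsto (fun n => ∑ j ∈ Finset.range N,
          ‖inner ℂ (e j) ((A n - Alim) (e i))‖ ^ 2) atTop (nhds 0) := by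
        have : Tendsto (fun n => ∑ j ∈ Finset.range N,
          ‖inner ℂ (e j) ((A n - Alim) (e i))‖ ^ 2) atTop
            (nhds (∑ j ∈ Finset.range N, (0 : ℝ))) := by
          refine tendsto_finsetSum _ fun j _ => ?_
          have h := ((aux_weak e A Alim hweak (e j) (e i)).sub_const
            (inner ℂ (e j) (Alim (e i)))).norm.pow 2
          simpa [sub_apply, inner_sub_right] using h
        simpa using this
      filter_upwards [hN2, h1.eventually (gt_mem_nhds (half_pos hε))] with n hn1 hn2
      have hb := aux_strong_bound e (A n) Alim (hpos n) hposlim (htc n) htclim (hCA n) hCl N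
        hn1 hN1 i
      have : 4 * (ε / (8 * C) * C) = ε / 2 := by field_simp; norm_num
      linarith
    have := hsq.sqrt
    simpa [Real.sqrt_sq (norm_nonneg _)] using this
  have hnn : ∀ n, 0 ≤ traceNorm e (A n - Alim) := fun n => tsum_nonneg fun i =>
    aux_nonneg _ ((ContinuousLinearMap.nonneg_iff_isPositive _).1 (CFC.sqrt_nonneg _)) _
  rw [tendsto_order]
  refine ⟨fun a ha => Eventually.of_forall fun n => lt_of_lt_of_le ha (hnn n), ?_⟩
  intro ε hε
  obtain ⟨N, hN1, hN2⟩ := aux_tail e A Alim hpos hposlim htc htclim hweak hlimsup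
    (ε := (ε / 4) ^ 2 / C) (by positivity)
  have h1 : Tendsto (fun n => ∑ i ∈ Finset.range N, ‖(A n - Alim) (e i)‖) atTop (nhds 0) := by
    have := tendsto_finsetSum (Finset.range N) fun i _ => strong i
    simpa using this
  filter_upwards [hN2, h1.eventually (gt_mem_nhds (half_pos hε))] with n hn1 hn2
  have hb := aux_trace_bound e (A n) Alim (hpos n) hposlim (htc n) htclim (hCA n) hCl N hn1 hN1
  have : √((ε / 4) ^ 2 / C) * √C = ε / 4 := by
    rw [← Real.sqrt_mul (by positivity), div_mul_cancel₀ _ (by positivity),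
      Real.sqrt_sq (by positivity)]
  linarith
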